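/- If v ≥ 0 is controllable with respect to a speed-limit constraint list VL = ⟨(d_i, V_i)⟩_{i=0,…,n} for the braking function B_ex, then C_ex(v, VL) is well-defined, and its output (Δv, Δd) := C_ex(v, VL) satisfies v + Δv ≥ 0, Δd ≥ 0, and the three speed-control requirements for B_ex: (i) v + Δv ≤ V_i whenever d_i ≤ Δd < d_{i+1}; (ii) Δd + B_ex(v + Δv) ≤ d_i + B_ex(V_i) whenever Δd ≤ d_i; (iii) Δd ≤ d_i whenever V_i = 0. In other words, C_ex is a speed control function for B_ex. -/

import Mathlib

/-!
The braking function `Bex` is strictly increasing and locally Lipschitz on `[0, ∞)`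
(`Bex_slope_bounds`: all its slopes on `[0, (n + 1) β)`, `β = bmax * Δt`, lie between `Δt / 2`
and `(n + 1) * Δt`).

Let `a₀ = max (-bmax) (-v / Δt)` be the hardest braking that keeps the speed nonnegative. The
recursion for `Bex` says exactly that the left-hand side
`v * Δt + a * Δt ^ 2 / 2 + Bex (v + a * Δt)` of the compliance condition equals `Bex v` at
`a = a₀` (`minAcc_step`), so controllability gives `a₀ ∈ S_i` for every `i`. As that left-hand side
is continuous and increasing in `a`, each `S_i` is a compact interval starting at `a₀`; in
particular `max S_i` exists (`compSet_isGreatest`, which is the well-definedness of `Cex`), and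
`a* = min_i max S_i` lies in every `S_i` (`astar_mem`). The three requirements are then read off
from `a* ∈ S_i` and the strict monotonicity of `Bex`.
-/

/-- A speed `v` is controllable with respect to a speed-limit constraint list `VL`
(for the braking function `B`) if `B v ≤ d + B V` for every constraint `(d, V)` in `VL`. -/
def Controllable (B : ℝ → ℝ) (v : ℝ) (VL : List (ℝ × ℝ)) : Prop :=
  ∀ p ∈ VL, B v ≤ p.1 + B p.2

/-- A valid speed-limit constraint list: nonempty, first distance is 0, distances strictly
increasing, all speed limits nonnegative. -/
def ValidVL (VL : List (ℝ × ℝ)) : Prop :=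
  VL ≠ [] ∧ (∀ h : 0 < VL.length, (VL.get ⟨0, h⟩).1 = 0) ∧
    List.Chain' (· < ·) (VL.map Prod.fst) ∧ ∀ p ∈ VL, 0 ≤ p.2

/-- A speed control function for a braking function `B`: for every controllable pair
`(v, VL)` it returns `(Δv, Δd)` with `v + Δv ≥ 0`, `Δd ≥ 0`, such that for all `i`:
(i) `v + Δv ≤ V_i` whenever `d_i ≤ Δd < d_{i+1}` (with `d_{n+1} = +∞`);
(ii) `Δd + B (v + Δv) ≤ d_i + B V_i` whenever `Δd ≤ d_i`;
(iii) `Δd ≤ d_i` whenever `V_i = 0`. -/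
def IsSpeedControl (B : ℝ → ℝ) (C : ℝ → List (ℝ × ℝ) → ℝ × ℝ) : Prop :=
  ∀ v VL, 0 ≤ v → ValidVL VL → Controllable B v VL →
    0 ≤ v + (C v VL).1 ∧ 0 ≤ (C v VL).2 ∧
    (∀ i : Fin VL.length, (VL.get i).1 ≤ (C v VL).2 →
      (∀ h : (i : ℕ) + 1 < VL.length, (C v VL).2 < (VL.get ⟨(i : ℕ) + 1, h⟩).1) →
      v + (C v VL).1 ≤ (VL.get i).2) ∧
    (∀ p ∈ VL, (C v VL).2 ≤ p.1 → (C v VL).2 + B (v + (C v VL).1) ≤ p.1 + B p.2) ∧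
    (∀ p ∈ VL, p.2 = 0 → (C v VL).2 ≤ p.1)

/-- The compliance set `S_i` for a single speed-limit constraint `(d, V)`. -/
def compSet (bmax amax Δt : ℝ) (Bex : ℝ → ℝ) (v d V : ℝ) : Set ℝ :=
  {a | a ∈ Set.Icc (-bmax) amax ∧ 0 ≤ v + a * Δt ∧
    ((0 < d ∧ v * Δt + a * Δt ^ 2 / 2 + Bex (v + a * Δt) ≤ d + Bex V) ∨
     (d = 0 ∧ v + a * Δt ≤ V))}

/-- The example speed control function:
`C_ex (v, VL) = (a*·Δt, v·Δt + a*·Δt²/2)` where `a* = min_i max S_i`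
(the minimum over the constraints of `VL` of the greatest element of the corresponding
compliance set). -/
noncomputable def Cex (bmax amax Δt : ℝ) (Bex : ℝ → ℝ)
    (v : ℝ) (VL : List (ℝ × ℝ)) : ℝ × ℝ :=
  let astar := sInf {y : ℝ | ∃ p ∈ VL, y = sSup (compSet bmax amax Δt Bex v p.1 p.2)}
  (astar * Δt, v * Δt + astar * Δt ^ 2 / 2)

/-- Slope bounds for the braking function. The lower bound yields strict monotonicity, the upper
bound continuity. -/
theorem Bex_slope_bounds {bmax Δt : ℝ} (hb : 0 < bmax) (ht : 0 < Δt) {Bex : ℝ → ℝ}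
    (hBex1 : ∀ v, 0 ≤ v → v < bmax * Δt → Bex v = v * Δt / 2)
    (hBex2 : ∀ v, bmax * Δt ≤ v → Bex v = v * Δt - bmax * Δt ^ 2 / 2 + Bex (v - bmax * Δt))
    (n : ℕ) : ∀ x y, 0 ≤ x → x ≤ y → y < (n + 1) * (bmax * Δt) →
      Δt / 2 * (y - x) ≤ Bex y - Bex x ∧ Bex y - Bex x ≤ (n + 1) * Δt * (y - x) := by
  have hβ : 0 < bmax * Δt := mul_pos hb ht
  have base : ∀ x y, 0 ≤ x → x ≤ y → y < bmax * Δt →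
      Bex y - Bex x = Δt / 2 * (y - x) := by
    intro x y hx hxy hy
    rw [hBex1 y (hx.trans hxy) hy, hBex1 x hx (hxy.trans_lt hy)]
    ring
  induction n with
  | zero =>
    intro x y hx hxy hy
    have h := base x y hx hxy (by simpa using hy)
    have h' : 0 ≤ Δt * (y - x) := mul_nonneg ht.le (sub_nonneg.2 hxy)
    push_cast
    constructor <;> linarith
  | succ n ih =>
    intro x y hx hxy hy
    push_cast at hy ⊢
    have h' : 0 ≤ Δt * (y - x) := mul_nonneg ht.le (sub_nonneg.2 hxy)
    have hn : 0 ≤ (n : ℝ) * (Δt * (y - x)) := mul_nonneg n.cast_nonneg h'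
    rcases lt_or_ge y (bmax * Δt) with hyβ | hyβ
    · have h := base x y hx hxy hyβ
      constructor <;> linarith
    · rcases lt_or_ge x (bmax * Δt) with hxβ | hxβ
      · obtain ⟨h1, h2⟩ := ih 0 (y - bmax * Δt) le_rfl (by linarith) (by linarith)
        have h0 : Bex 0 = 0 := by rw [hBex1 0 le_rfl hβ]; ring
        rw [h0] at h1 h2
        have e1 : 0 ≤ Δt * (y - bmax * Δt) := mul_nonneg ht.le (by linarith)
        have e2 : 0 ≤ Δt * (bmax * Δt - x) := mul_nonneg ht.le (by linarith)
        have e3 : 0 ≤ (n : ℝ) * (Δt * (bmax * Δt - x)) := mul_nonneg n.cast_nonneg e2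
        rw [hBex2 y hyβ, hBex1 x hx hxβ]
        constructor <;> linarith
      · obtain ⟨h1, h2⟩ := ih (x - bmax * Δt) (y - bmax * Δt) (by linarith) (by linarith)
          (by linarith)
        rw [hBex2 y hyβ, hBex2 x hxβ]
        constructor <;> linarith

theorem Bex_strictMonoOn {bmax Δt : ℝ} (hb : 0 < bmax) (ht : 0 < Δt) {Bex : ℝ → ℝ}
    (hBex1 : ∀ v, 0 ≤ v → v < bmax * Δt → Bex v = v * Δt / 2)
    (hBex2 : ∀ v, bmax * Δt ≤ v → Bex v = v * Δt - bmax * Δt ^ 2 / 2 + Bex (v - bmax * Δt)) :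
    StrictMonoOn Bex (Set.Ici 0) := by
  intro x hx y _ hxy
  obtain ⟨n, hn⟩ := exists_nat_gt (y / (bmax * Δt))
  have hβ : 0 < bmax * Δt := mul_pos hb ht
  rw [div_lt_iff₀ hβ] at hn
  have h := (Bex_slope_bounds hb ht hBex1 hBex2 n x y hx hxy.le (by linarith)).1
  have h' : 0 < Δt / 2 * (y - x) := mul_pos (by linarith) (by linarith)
  linarith

theorem Bex_continuousOn {bmax Δt : ℝ} (hb : 0 < bmax) (ht : 0 < Δt) {Bex : ℝ → ℝ}
    (hBex1 : ∀ v, 0 ≤ v → v < bmax * Δt → Bex v = v * Δt / 2)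
    (hBex2 : ∀ v, bmax * Δt ≤ v → Bex v = v * Δt - bmax * Δt ^ 2 / 2 + Bex (v - bmax * Δt))
    (M : ℝ) : ContinuousOn Bex (Set.Icc 0 M) := by
  obtain ⟨n, hn⟩ := exists_nat_gt (M / (bmax * Δt))
  have hβ : 0 < bmax * Δt := mul_pos hb ht
  rw [div_lt_iff₀ hβ] at hn
  have hK : 0 ≤ ((n : ℝ) + 1) * Δt := by positivity
  have key : LipschitzOnWith (Real.toNNReal (((n : ℝ) + 1) * Δt)) Bex (Set.Icc 0 M) := by
    refine LipschitzOnWith.of_le_add_mul _ fun x hx y hy => ?_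
    rw [Real.coe_toNNReal _ hK]
    have hmono := (Bex_strictMonoOn hb ht hBex1 hBex2).monotoneOn
    rcases le_total x y with h | h
    · have h1 := hmono hx.1 hy.1 h
      have h2 : 0 ≤ ((n : ℝ) + 1) * Δt * dist x y := mul_nonneg hK dist_nonneg
      linarith
    · have h1 := (Bex_slope_bounds hb ht hBex1 hBex2 n y x hy.1 h (by linarith [hx.2])).2
      rw [Real.dist_eq, abs_of_nonneg (sub_nonneg.2 h)]
      linarith
  exact key.continuousOn

/-- The least acceleration (hardest braking) available at speed `v` that keeps the speed
nonnegative after one time step. -/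
noncomputable def minAcc (bmax Δt v : ℝ) : ℝ := max (-bmax) (-v / Δt)

theorem minAcc_le_iff {bmax Δt v a : ℝ} (ht : 0 < Δt) :
    minAcc bmax Δt v ≤ a ↔ -bmax ≤ a ∧ 0 ≤ v + a * Δt := by
  rw [minAcc, max_le_iff, div_le_iff₀ ht]
  constructor <;> rintro ⟨h1, h2⟩ <;> exact ⟨h1, by linarith⟩

/-- Braking as hard as possible for one step keeps the total stopping distance equal to `Bex v`:
this is the defining recursion of `Bex`. -/
theorem minAcc_step {bmax Δt : ℝ} (hb : 0 < bmax) (ht : 0 < Δt) {Bex : ℝ → ℝ}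
    (hBex1 : ∀ v, 0 ≤ v → v < bmax * Δt → Bex v = v * Δt / 2)
    (hBex2 : ∀ v, bmax * Δt ≤ v → Bex v = v * Δt - bmax * Δt ^ 2 / 2 + Bex (v - bmax * Δt))
    {v : ℝ} (hv : 0 ≤ v) :
    v * Δt + minAcc bmax Δt v * Δt ^ 2 / 2 + Bex (v + minAcc bmax Δt v * Δt) = Bex v := by
  rcases lt_or_ge v (bmax * Δt) with h | h
  · have e : minAcc bmax Δt v = -v / Δt := by
      apply max_eq_right
      rw [le_div_iff₀ ht]
      linarith
    have e1 : -v / Δt * Δt = -v := div_mul_cancel₀ _ ht.ne'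
    have e2 : -v / Δt * Δt ^ 2 = -v * Δt := by rw [pow_two, ← mul_assoc, e1]
    rw [e, e1, e2, add_neg_cancel, hBex1 v hv h, hBex1 0 le_rfl (mul_pos hb ht)]
    ring
  · have e : minAcc bmax Δt v = -bmax := by
      apply max_eq_left
      rw [div_le_iff₀ ht]
      linarith
    rw [e, hBex2 v h, show v + -bmax * Δt = v - bmax * Δt by ring]
    ring

theorem minAcc_nonpos {bmax Δt v : ℝ} (hb : 0 < bmax) (ht : 0 < Δt) (hv : 0 ≤ v) :
    minAcc bmax Δt v ≤ 0 :=
  (minAcc_le_iff ht).2 ⟨by linarith, by linarith⟩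

/-- Controllability makes the compliance set nonempty: it contains `minAcc`. -/
theorem minAcc_mem_compSet {bmax amax Δt : ℝ} (hb : 0 < bmax) (ha : 0 < amax) (ht : 0 < Δt)
    {Bex : ℝ → ℝ}
    (hBex1 : ∀ v, 0 ≤ v → v < bmax * Δt → Bex v = v * Δt / 2)
    (hBex2 : ∀ v, bmax * Δt ≤ v → Bex v = v * Δt - bmax * Δt ^ 2 / 2 + Bex (v - bmax * Δt))
    {v d V : ℝ} (hv : 0 ≤ v) (hd : 0 ≤ d) (hV : 0 ≤ V) (hc : Bex v ≤ d + Bex V) :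
    minAcc bmax Δt v ∈ compSet bmax amax Δt Bex v d V := by
  have h0 := minAcc_nonpos hb ht hv
  obtain ⟨h1, h2⟩ := (minAcc_le_iff (bmax := bmax) (v := v) ht).1 le_rfl
  refine ⟨⟨h1, by linarith⟩, h2, ?_⟩
  rcases hd.lt_or_eq with hd | rfl
  · left
    exact ⟨hd, (minAcc_step hb ht hBex1 hBex2 hv).trans_le hc⟩
  · right
    rw [zero_add] at hc
    have hvV : v ≤ V := ((Bex_strictMonoOn hb ht hBex1 hBex2).le_iff_le hv hV).1 hc
    have := mul_nonpos_of_nonpos_of_nonneg h0 ht.le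
    exact ⟨rfl, by linarith⟩

theorem compSet_downward {bmax amax Δt : ℝ} (hb : 0 < bmax) (ht : 0 < Δt)
    {Bex : ℝ → ℝ}
    (hBex1 : ∀ v, 0 ≤ v → v < bmax * Δt → Bex v = v * Δt / 2)
    (hBex2 : ∀ v, bmax * Δt ≤ v → Bex v = v * Δt - bmax * Δt ^ 2 / 2 + Bex (v - bmax * Δt))
    {v d V a a' : ℝ} (h : a ∈ compSet bmax amax Δt Bex v d V)
    (h1 : minAcc bmax Δt v ≤ a') (h2 : a' ≤ a) :
    a' ∈ compSet bmax amax Δt Bex v d V := by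
  obtain ⟨⟨_, h4⟩, h5, h6⟩ := h
  obtain ⟨h7, h8⟩ := (minAcc_le_iff ht).1 h1
  have e1 : a' * Δt ≤ a * Δt := mul_le_mul_of_nonneg_right h2 ht.le
  refine ⟨⟨h7, h2.trans h4⟩, h8, ?_⟩
  rcases h6 with ⟨hd, h6⟩ | ⟨hd, h6⟩
  · have e2 : a' * Δt ^ 2 ≤ a * Δt ^ 2 := mul_le_mul_of_nonneg_right h2 (by positivity)
    have e3 := (Bex_strictMonoOn hb ht hBex1 hBex2).monotoneOn (a := v + a' * Δt)
      (b := v + a * Δt) h8 h5 (by linarith)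
    exact Or.inl ⟨hd, by linarith⟩
  · exact Or.inr ⟨hd, by linarith⟩

theorem compSet_isCompact {bmax amax Δt : ℝ} (hb : 0 < bmax) (ht : 0 < Δt)
    {Bex : ℝ → ℝ}
    (hBex1 : ∀ v, 0 ≤ v → v < bmax * Δt → Bex v = v * Δt / 2)
    (hBex2 : ∀ v, bmax * Δt ≤ v → Bex v = v * Δt - bmax * Δt ^ 2 / 2 + Bex (v - bmax * Δt))
    (v V : ℝ) {d : ℝ} (hd : 0 ≤ d) :
    IsCompact (compSet bmax amax Δt Bex v d V) := by
  have hI : IsClosed (Set.Icc (minAcc bmax Δt v) amax) := isClosed_Icc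
  have hsub : compSet bmax amax Δt Bex v d V ⊆ Set.Icc (minAcc bmax Δt v) amax :=
    fun a h => ⟨(minAcc_le_iff ht).2 ⟨h.1.1, h.2.1⟩, h.1.2⟩
  refine isCompact_Icc.of_isClosed_subset ?_ hsub
  rcases hd.lt_or_eq with hd | rfl
  · have hmaps : Set.MapsTo (fun a => v + a * Δt) (Set.Icc (minAcc bmax Δt v) amax)
        (Set.Icc 0 (v + amax * Δt)) := fun a h =>
      ⟨((minAcc_le_iff ht).1 h.1).2, by
        have := mul_le_mul_of_nonneg_right h.2 ht.le
        show v + a * Δt ≤ v + amax * Δt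
        linarith⟩
    have hB : ContinuousOn (fun a => Bex (v + a * Δt)) (Set.Icc (minAcc bmax Δt v) amax) :=
      (Bex_continuousOn hb ht hBex1 hBex2 (v + amax * Δt)).comp
        (by fun_prop : Continuous fun a => v + a * Δt).continuousOn hmaps
    have hF : ContinuousOn (fun a => v * Δt + a * Δt ^ 2 / 2 + Bex (v + a * Δt))
        (Set.Icc (minAcc bmax Δt v) amax) :=
      (by fun_prop : Continuous fun a => v * Δt + a * Δt ^ 2 / 2).continuousOn.add hB
    convert hF.preimage_isClosed_of_isClosed hI (isClosed_Iic (a := d + Bex V)) using 1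
    ext a
    simp only [compSet, Set.mem_ofPred_eq, Set.mem_inter_iff, Set.mem_Icc, Set.mem_preimage,
      Set.mem_Iic, minAcc_le_iff ht, hd, hd.ne', true_and, false_and, or_false]
    tauto
  · have hF : IsClosed {a : ℝ | v + a * Δt ≤ V} :=
      isClosed_le (by fun_prop) continuous_const
    convert hI.inter hF using 1
    ext a
    simp only [compSet, Set.mem_ofPred_eq, Set.mem_inter_iff, Set.mem_Icc,
      minAcc_le_iff ht, lt_irrefl, true_and, false_and, false_or]
    tauto

/-- The maximum of a compliance set exists, so the `sSup` in `Cex` is a genuine maximum. -/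
theorem compSet_isGreatest {bmax amax Δt : ℝ} (hb : 0 < bmax) (ha : 0 < amax) (ht : 0 < Δt)
    {Bex : ℝ → ℝ}
    (hBex1 : ∀ v, 0 ≤ v → v < bmax * Δt → Bex v = v * Δt / 2)
    (hBex2 : ∀ v, bmax * Δt ≤ v → Bex v = v * Δt - bmax * Δt ^ 2 / 2 + Bex (v - bmax * Δt))
    {v d V : ℝ} (hv : 0 ≤ v) (hd : 0 ≤ d) (hV : 0 ≤ V) (hc : Bex v ≤ d + Bex V) :
    IsGreatest (compSet bmax amax Δt Bex v d V) (sSup (compSet bmax amax Δt Bex v d V)) :=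
  (compSet_isCompact hb ht hBex1 hBex2 v V hd).isGreatest_sSup
    ⟨_, minAcc_mem_compSet hb ha ht hBex1 hBex2 hv hd hV hc⟩

theorem ValidVL.fst_nonneg {VL : List (ℝ × ℝ)} (h : ValidVL VL) : ∀ p ∈ VL, 0 ≤ p.1 := by
  obtain ⟨h1, h2, h3, -⟩ := h
  cases VL with
  | nil => exact absurd rfl h1
  | cons q l =>
    have hq : q.1 = 0 := h2 (by simp)
    have h4 := List.isChain_iff_pairwise.1 h3
    rw [List.map_cons, List.pairwise_cons] at h4
    intro p hp
    rcases List.mem_cons.1 hp with rfl | hp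
    · exact hq.ge
    · exact hq.symm.le.trans (h4.1 p.1 (List.mem_map_of_mem hp)).le

/-- The acceleration `a* = min_i max S_i` lies in every compliance set. -/
theorem astar_mem {bmax amax Δt : ℝ} (hb : 0 < bmax) (ha : 0 < amax) (ht : 0 < Δt)
    {Bex : ℝ → ℝ}
    (hBex1 : ∀ v, 0 ≤ v → v < bmax * Δt → Bex v = v * Δt / 2)
    (hBex2 : ∀ v, bmax * Δt ≤ v → Bex v = v * Δt - bmax * Δt ^ 2 / 2 + Bex (v - bmax * Δt))
    {v : ℝ} {VL : List (ℝ × ℝ)} (hv : 0 ≤ v) (hVL : ValidVL VL) (hc : Controllable Bex v VL) :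
    ∀ p ∈ VL, sInf {y : ℝ | ∃ p ∈ VL, y = sSup (compSet bmax amax Δt Bex v p.1 p.2)} ∈
      compSet bmax amax Δt Bex v p.1 p.2 := by
  have hG : ∀ p ∈ VL, IsGreatest (compSet bmax amax Δt Bex v p.1 p.2)
      (sSup (compSet bmax amax Δt Bex v p.1 p.2)) := fun p hp =>
    compSet_isGreatest hb ha ht hBex1 hBex2 hv (hVL.fst_nonneg p hp) (hVL.2.2.2 p hp) (hc p hp)
  have hlow : minAcc bmax Δt v ∈
      lowerBounds {y : ℝ | ∃ p ∈ VL, y = sSup (compSet bmax amax Δt Bex v p.1 p.2)} := by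
    rintro _ ⟨p, hp, rfl⟩
    exact (minAcc_le_iff ht).2 ⟨(hG p hp).1.1.1, (hG p hp).1.2.1⟩
  intro p hp
  exact compSet_downward hb ht hBex1 hBex2 (hG p hp).1
    (le_csInf ⟨_, p, hp, rfl⟩ hlow) (csInf_le ⟨_, hlow⟩ ⟨p, hp, rfl⟩)

/-- if `v ≥ 0` is controllable with respect to a speed-limit constraint list
`VL` for `B_ex`, then `C_ex (v, VL)` is well-defined and its output `(Δv, Δd)` satisfies
`v + Δv ≥ 0`, `Δd ≥ 0` and the three speed-control requirements for `B_ex`; in other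
words, `C_ex` is a speed control function for `B_ex`.
Here `B_ex` is any function satisfying the defining recursion. -/
theorem Cex_isSpeedControl
    (bmax amax Δt : ℝ) (hb : 0 < bmax) (ha : 0 < amax) (ht : 0 < Δt)
    (Bex : ℝ → ℝ)
    (hBex1 : ∀ v, 0 ≤ v → v < bmax * Δt → Bex v = v * Δt / 2)
    (hBex2 : ∀ v, bmax * Δt ≤ v → Bex v = v * Δt - bmax * Δt ^ 2 / 2 + Bex (v - bmax * Δt)) :
    IsSpeedControl Bex (Cex bmax amax Δt Bex) := by
  intro v VL hv hVL hc
  have hmem := astar_mem hb ha ht hBex1 hBex2 hv hVL hc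
  unfold Cex
  generalize sInf {y : ℝ | ∃ p ∈ VL, y = sSup (compSet bmax amax Δt Bex v p.1 p.2)} = a at hmem ⊢
  have hmono := Bex_strictMonoOn hb ht hBex1 hBex2
  have hB0 : Bex 0 = 0 := by rw [hBex1 0 le_rfl (mul_pos hb ht)]; ring
  have hv' : 0 ≤ v + a * Δt := by
    obtain ⟨p, hp⟩ := List.exists_mem_of_ne_nil VL hVL.1
    exact (hmem p hp).2.1
  -- The step length is the mean of the initial and final speeds times the duration.
  have hΔd : v * Δt + a * Δt ^ 2 / 2 = (v + (v + a * Δt)) / 2 * Δt := by ring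
  have hBpos : 0 ≤ Bex (v + a * Δt) := by
    rw [← hB0]
    exact hmono.monotoneOn Set.self_mem_Ici hv' hv'
  refine ⟨hv', ?_, fun i hi _ => ?_, fun p hp hpd => ?_, fun p hp hpV => ?_⟩
  · show 0 ≤ v * Δt + a * Δt ^ 2 / 2
    rw [hΔd]
    positivity
  · have hp := List.get_mem VL i
    revert hi
    generalize VL.get i = p at hp
    intro hi
    rcases (hmem p hp).2.2 with ⟨_, h⟩ | ⟨_, h⟩
    · exact (hmono.le_iff_le hv' (hVL.2.2.2 p hp)).1 (by dsimp only at hi; linarith)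
    · exact h
  · rcases (hmem p hp).2.2 with ⟨_, h⟩ | ⟨hd, _⟩
    · exact h
    · dsimp only at hpd ⊢
      rw [hd, hΔd] at hpd
      -- A step of length zero means that both the initial and the final speed vanish.
      have h1 : (v + (v + a * Δt)) / 2 ≤ 0 := nonpos_of_mul_nonpos_left hpd ht
      have h2 : v + a * Δt = 0 := by linarith
      have h3 : Bex 0 ≤ Bex p.2 :=
        hmono.monotoneOn Set.self_mem_Ici (hVL.2.2.2 p hp) (hVL.2.2.2 p hp)
      rw [hΔd, hd, h2, hB0, show v = 0 by linarith]
      linarith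
  · dsimp only
    rcases (hmem p hp).2.2 with ⟨_, h⟩ | ⟨hd, h⟩
    · rw [hpV, hB0] at h
      linarith
    · have hcp := hc p hp
      rw [hd, zero_add, hpV] at hcp
      have h1 : v ≤ 0 := (hmono.le_iff_le hv Set.self_mem_Ici).1 hcp
      rw [hΔd, hd]
      exact mul_nonpos_of_nonpos_of_nonneg (by linarith) ht.le
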